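/- arXiv:1808.06632 — 3 statements merged into one kernel-verified Lean document; each statement's English description precedes it below -/
import Mathlib

section
/- Let a < 0, h > 0 and s_min ≥ 0 be real numbers, and define s(u, w) := (if u > w then (u² − w²)/(−2a) + (u − w)·h − a·h²/2 else 0) + s_min. Let v ≥ 0, v_ro ≥ 0 and g be real numbers with g ≥ s(v, v_ro). Define follower slot velocities u_k := max(0, v + (k+1)·a·h) for k ∈ ℕ, let (w_k) be any sequence with w_0 ≥ max(0, v_ro + a·h) and w_{k+1} ≥ max(0, w_k + a·h) for all k, and define gaps g_0 := g and g_{k+1} := g_k + (w_k − u_k)·h. Then g_k ≥ s_min for all k ∈ ℕ. -/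
/-!
The safe separation is itself an inductive invariant. Suppose the gap is at least `sAV` of the
current velocities `(u, w)`, the follower moves to `u' = max 0 (u + a h)` and the leader to any
admissible `w'`. Then the new gap is at least `sAV` of `(u', w')` (`sAV_step`). When
`u' ≤ w'` the gap does not shrink. When `u' > w'` the follower is still moving, so
`u' = u + a h`, all terms in `u` cancel, and what remains is a quadratic inequality in `w, w'` that
is an equality at full leader braking `w' = w + a h`. Since `s_min ≤ sAV` everywhere
(`le_sAV`), induction along the slots concludes, with `v` and `v_ro` as the
velocities of the slot preceding slot `0`.
-/

/-- The paper's AV–AV safe-separation distance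
`s(u, w) = 1{u > w}·[(u² - w²)/(-2a) + (u - w)·h - a·h²/2] + s_min`. -/
noncomputable def sAV (a h s_min u w : ℝ) : ℝ :=
  (if u > w then (u ^ 2 - w ^ 2) / (-2 * a) + (u - w) * h - a * h ^ 2 / 2 else 0)
    + s_min

theorem le_sAV {a h s_min u w : ℝ} (ha : a < 0) (hh : 0 < h) (hw : 0 ≤ w) :
    s_min ≤ sAV a h s_min u w := by
  unfold sAV
  split_ifs with huw
  · have h1 : 0 ≤ (u ^ 2 - w ^ 2) / (-2 * a) := div_nonneg (by nlinarith) (by linarith)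
    have h2 : 0 ≤ (u - w) * h := mul_nonneg (by linarith) hh.le
    have h3 : a * h ^ 2 ≤ 0 := mul_nonpos_of_nonpos_of_nonneg ha.le (sq_nonneg h)
    linarith
  · linarith

/-- One slot of maximal braking by the follower, against any admissible move of the leader,
preserves the safe separation. -/
theorem sAV_step {a h s_min u w w' g : ℝ} (ha : a < 0) (hh : 0 < h) (hw : 0 ≤ w)
    (hw' : max 0 (w + a * h) ≤ w') (hg : sAV a h s_min u w ≤ g) :
    sAV a h s_min (max 0 (u + a * h)) w' ≤ g + (w' - max 0 (u + a * h)) * h := by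
  obtain ⟨hw0, hw1⟩ := max_le_iff.1 hw'
  by_cases hc : max 0 (u + a * h) > w'
  · have hu : max 0 (u + a * h) = u + a * h := by
      rcases max_choice 0 (u + a * h) with h0 | h0
      · rw [h0] at hc; linarith
      · exact h0
    rw [hu] at hc ⊢
    have huw : u > w := by linarith
    unfold sAV at hg ⊢
    rw [if_pos huw] at hg
    rw [if_pos hc]
    have key : ((u + a * h) ^ 2 - w' ^ 2) / (-2 * a) - (u ^ 2 - w ^ 2) / (-2 * a)
        ≤ (u - w) * h + 2 * (w' - (u + a * h)) * h := by
      rw [← sub_div, div_le_iff₀ (by linarith)]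
      -- After clearing `-2 a`, right minus left is `(w' - 2 a h) ^ 2 - (w - a h) ^ 2`, which
      -- factors as the product below.
      have hd : a * h < 0 := mul_neg_of_neg_of_pos ha hh
      have hq : 0 ≤ (w' - w - a * h) * (w' + w - 3 * (a * h)) :=
        mul_nonneg (by linarith) (by linarith)
      nlinarith
    linarith
  · have h1 : 0 ≤ (w' - max 0 (u + a * h)) * h := mul_nonneg (by linarith) hh.le
    have h2 := (le_sAV ha hh hw).trans hg
    unfold sAV
    rw [if_neg hc]
    linarith

/-- Multi-step safety for a pair of AVs: the follower applies
maximal braking `u_k = max 0 (v + (k+1)·a·h)` starting from previous-slot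
velocity `v`, the leader's slot velocities `w_k` are admissible
(`w_0 ≥ max 0 (v_ro + a·h)`, `w_{k+1} ≥ max 0 (w_k + a·h)`), and the gap
evolves as `g_{k+1} = g_k + (w_k - u_k)·h` from `g_0 ≥ s(v, v_ro)`.
Then `g_k ≥ s_min` for all `k`. -/
theorem av_multi_step_safety (a h s_min v v_ro : ℝ)
    (ha : a < 0) (hh : 0 < h) (hsmin : 0 ≤ s_min)
    (hv : 0 ≤ v) (hvro : 0 ≤ v_ro)
    (w : ℕ → ℝ) (hw0 : max 0 (v_ro + a * h) ≤ w 0)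
    (hw : ∀ k : ℕ, max 0 (w k + a * h) ≤ w (k + 1))
    (g : ℕ → ℝ) (hg0 : sAV a h s_min v v_ro ≤ g 0)
    (hgrec : ∀ k : ℕ,
      g (k + 1) = g k + (w k - max 0 (v + ((k : ℝ) + 1) * a * h)) * h) :
    ∀ k : ℕ, s_min ≤ g k := by
  have hd : a * h < 0 := mul_neg_of_neg_of_pos ha hh
  have hwn : ∀ k, 0 ≤ w k := by
    intro k
    cases k with
    | zero => exact (le_max_left _ _).trans hw0
    | succ k => exact (le_max_left _ _).trans (hw k)
  -- Braking from the truncated velocity `max 0 x` gives the same result as braking from `x`.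
  have hbrake : ∀ x : ℝ, max 0 (max 0 x + a * h) = max 0 (x + a * h) := by
    intro x
    rcases le_total 0 x with hx | hx
    · rw [max_eq_right hx]
    · rw [max_eq_left hx, max_eq_left (by linarith), max_eq_left (by linarith)]
  have inv : ∀ k : ℕ,
      sAV a h s_min (max 0 (v + ((k : ℝ) + 1) * a * h)) (w k) ≤ g (k + 1) := by
    intro k
    induction k with
    | zero =>
      have hs := sAV_step ha hh hvro hw0 hg0
      have he : v + (((0 : ℕ) : ℝ) + 1) * a * h = v + a * h := by push_cast; ring
      rw [hgrec 0, he]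
      exact hs
    | succ k ih =>
      have hs := sAV_step ha hh (hwn k) (hw k) ih
      have he : v + (((k + 1 : ℕ) : ℝ) + 1) * a * h
          = v + ((k : ℝ) + 1) * a * h + a * h := by push_cast; ring
      rw [hbrake] at hs
      rw [hgrec (k + 1), he]
      exact hs
  intro k
  cases k with
  | zero => exact (le_sAV ha hh hvro).trans hg0
  | succ k => exact (le_sAV ha hh (hwn k)).trans (inv k)
end

section
/- Let a < 0, h > 0, s_min ≥ 0 and v ≥ 0 be real numbers, and suppose D ≥ v²/(−2a) + v·h − a·h²/2 + s_min. Then Σ_{k=0}^{∞} max(0, v + (k+1)·a·h) · h ≤ D − s_min. (Hence an AV whose distance to the stop line is at least s^{av}_{av}(v, 0), applying maximal per-slot braking from previous-slot velocity v, stops at least s_min before the stop line.) -/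
/-!
The kinetic potential `w₊² / (-2a)`, with `w₊ = max 0 w`, is an upper bound for the braking distance
from velocity `w`: while the vehicle moves, one slot changes it from `w` to `w' = w + a·h` and
releases `h·(w + w')/2 ≥ h·w'`, which is at least the distance covered in that slot. Telescoping
bounds every partial sum by `v² / (-2a)` (`sum_add_potential_le`), and a series of nonnegative terms
inherits the bound. The rest of the separation, `v·h - a·h²/2`, is nonnegative slack.
-/

/-- The distance covered in a slot is at most the potential released in it. -/
theorem slot_add_potential_le {a h : ℝ} (ha : a < 0) (hh : 0 < h) (w : ℝ) :
    max 0 (w + a * h) * h + max 0 (w + a * h) ^ 2 / (-2 * a) ≤ max 0 w ^ 2 / (-2 * a) := by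
  have hA : 0 < -2 * a := by linarith
  have hah : a * h < 0 := mul_neg_of_neg_of_pos ha hh
  rcases le_total (w + a * h) 0 with hw | hw
  · rw [max_eq_left hw]
    simpa using div_nonneg (sq_nonneg (max 0 w)) hA.le
  · rw [max_eq_right hw, max_eq_right (by linarith : (0 : ℝ) ≤ w), le_div_iff₀ hA, add_mul,
      div_mul_cancel₀ _ hA.ne']
    nlinarith [sq_nonneg (a * h)]

theorem sum_add_potential_le {a h v : ℝ} (ha : a < 0) (hh : 0 < h) (hv : 0 ≤ v) (n : ℕ) :
    ∑ k ∈ Finset.range n, max 0 (v + ((k : ℝ) + 1) * a * h) * h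
      + max 0 (v + (n : ℝ) * a * h) ^ 2 / (-2 * a) ≤ v ^ 2 / (-2 * a) := by
  induction n with
  | zero => simp [max_eq_right hv]
  | succ n ih =>
    have hstep := slot_add_potential_le ha hh (v + (n : ℝ) * a * h)
    rw [show v + (n : ℝ) * a * h + a * h = v + ((n : ℝ) + 1) * a * h by ring] at hstep
    rw [Finset.sum_range_succ]
    push_cast
    linarith

/-- An AV whose distance `D` to the stop line is at least
`s^{av}_{av}(v, 0) = v²/(-2a) + v·h - a·h²/2 + s_min`, applying maximal
per-slot braking from previous-slot velocity `v` (slot-`k` velocity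
`max 0 (v + (k+1)·a·h)`), stops at least `s_min` before the stop line. -/
theorem av_stops_before_line (a h s_min v D : ℝ)
    (ha : a < 0) (hh : 0 < h) (hsmin : 0 ≤ s_min) (hv : 0 ≤ v)
    (hD : v ^ 2 / (-2 * a) + v * h - a * h ^ 2 / 2 + s_min ≤ D) :
    (∑' k : ℕ, max 0 (v + ((k : ℝ) + 1) * a * h) * h) ≤ D - s_min := by
  have hA : 0 < -2 * a := by linarith
  have hvh : 0 ≤ v * h := mul_nonneg hv hh.le
  have hah : a * h ^ 2 ≤ 0 := mul_nonpos_of_nonpos_of_nonneg ha.le (sq_nonneg h)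
  have hsum : (∑' k : ℕ, max 0 (v + ((k : ℝ) + 1) * a * h) * h) ≤ v ^ 2 / (-2 * a) := by
    refine Real.tsum_le_of_sum_range_le (fun k => mul_nonneg (le_max_left _ _) hh.le) fun n => ?_
    have hn := sum_add_potential_le ha hh hv n
    have hpot : 0 ≤ max 0 (v + (n : ℝ) * a * h) ^ 2 / (-2 * a) := div_nonneg (sq_nonneg _) hA.le
    linarith
  linarith
end

section
/- Let a < 0, T_r ≥ 0, s_min ≥ 0, v_max ≥ 0 and n ≥ 2, and define s_hv(v_f, v_l) := (if v_f > v_l then (v_f² − v_l²)/(−2a) else 0) + v_max·T_r + s_min. Let v_1, …, v_n ∈ [0, v_max] and let u_1, …, u_n : [0, ∞) → ℝ be measurable speed functions such that for every i: max(0, v_i + a·t) ≤ u_i(t); u_i(t) ≤ v_max for t ∈ [0, T_r]; and u_i(t) ≤ max(0, v_i + a·(t − T_r)) for t ≥ T_r. If the initial gaps g_i between vehicle i+1 and vehicle i satisfy g_i ≥ s_hv(v_{i+1}, v_i) for all 1 ≤ i ≤ n−1, then for every T ≥ 0 and every 1 ≤ i ≤ n−1, g_i + ∫₀ᵀ u_i(t)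 dt − ∫₀ᵀ u_{i+1}(t) dt ≥ s_min. (Hence in a chain of HVs each following Rule 1, every consecutive pair stays at least s_min apart at all times.) -/
/-!
Write `φ_w t = max 0 (w + a * t)` for the maximal-braking speed profile started at speed `w`.
The follower travels at most `v_max * T_r` during its reaction time and at most `∫ φ_{v_f}` over
`[0, T - T_r]` afterwards, while the leader travels at least `∫ φ_{v_l}` over `[0, T - T_r]`. So
everything reduces to bounding `∫₀ˢ φ_{v_f} - ∫₀ˢ φ_{v_l}` (`integral_brake_sub_le`).
For `v_f ≤ v_l` this is nonpositive. For `v_f > v_l` the leader's profile is the follower's shifted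
in time by `d = (v_f - v_l) / (-a)`, the time the follower needs to brake from `v_f` to `v_l`; the
difference is therefore at most `∫₀ᵈ φ_{v_f}`, the distance covered while braking from `v_f` to
`v_l`, which is `(v_f ^ 2 - v_l ^ 2) / (-2 * a)`.
-/

open MeasureTheory

/-- The paper's HV safe-separation distance
`s_hv(v_f, v_l) = 1{v_f > v_l}·(v_f² - v_l²)/(-2a) + v_max·T_r + s_min`. -/
noncomputable def sHV (a T_r s_min v_max v_f v_l : ℝ) : ℝ :=
  (if v_f > v_l then (v_f ^ 2 - v_l ^ 2) / (-2 * a) else 0) + v_max * T_r + s_min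

/-- A measurable function with values in `[0, M]` on `[0, ∞)` is integrable on every interval
of `[0, ∞)`. -/
lemma intervalIntegrable_of_bdd {f : ℝ → ℝ} {M : ℝ} (hf : Measurable f)
    (h0 : ∀ t, 0 ≤ t → 0 ≤ f t) (hM : ∀ t, 0 ≤ t → f t ≤ M) {x y : ℝ} (hx : 0 ≤ x)
    (hy : 0 ≤ y) : IntervalIntegrable f volume x y := by
  refine (intervalIntegrable_const (c := M)).mono_fun' hf.aestronglyMeasurable ?_
  refine (ae_restrict_iff' measurableSet_uIoc).2 (Filter.Eventually.of_forall fun t ht => ?_)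
  have ht0 : 0 ≤ t := (le_min hx hy).trans ht.1.le
  beta_reduce
  rw [Real.norm_of_nonneg (h0 t ht0)]
  exact hM t ht0

lemma continuous_brake (a w : ℝ) : Continuous fun t : ℝ => max 0 (w + a * t) := by
  fun_prop

/-- Distance covered while braking at rate `-a` from speed `vf` down to speed `vl`. -/
lemma integral_brake_eq {a vf vl : ℝ} (ha : a < 0) (hvl : 0 ≤ vl) (h : vl < vf) :
    ∫ t in (0 : ℝ)..(vf - vl) / (-a), max 0 (vf + a * t) = (vf ^ 2 - vl ^ 2) / (-2 * a) := by
  have hd : 0 ≤ (vf - vl) / (-a) := div_nonneg (by linarith) (by linarith)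
  have had : a * ((vf - vl) / (-a)) = vl - vf := by
    have := ha.ne
    field_simp
    ring
  have hcongr : ∫ t in (0 : ℝ)..(vf - vl) / (-a), max 0 (vf + a * t)
      = ∫ t in (0 : ℝ)..(vf - vl) / (-a), (vf + a * t) := by
    refine intervalIntegral.integral_congr fun t ht => ?_
    rw [Set.uIcc_of_le hd] at ht
    have : a * ((vf - vl) / (-a)) ≤ a * t := mul_le_mul_of_nonpos_left ht.2 ha.le
    exact max_eq_right (by linarith)
  rw [hcongr, intervalIntegral.integral_add (by simp)
    (Continuous.intervalIntegrable (by fun_prop) _ _), intervalIntegral.integral_const_mul]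
  simp only [intervalIntegral.integral_const, integral_id, smul_eq_mul]
  have := ha.ne
  field_simp
  ring

/-- Two vehicles braking maximally from speeds `vf` and `vl` never lose more gap than the
braking-distance term of `sHV`. -/
lemma integral_brake_sub_le {a vf vl S : ℝ} (ha : a < 0) (hvl : 0 ≤ vl) (hS : 0 ≤ S) :
    (∫ t in (0 : ℝ)..S, max 0 (vf + a * t)) - ∫ t in (0 : ℝ)..S, max 0 (vl + a * t)
      ≤ if vf > vl then (vf ^ 2 - vl ^ 2) / (-2 * a) else 0 := by
  have hint : ∀ w x y : ℝ, IntervalIntegrable (fun t : ℝ => max 0 (w + a * t)) volume x y :=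
    fun w x y => (continuous_brake a w).intervalIntegrable x y
  split_ifs with h
  · rw [← integral_brake_eq ha hvl h]
    set d := (vf - vl) / (-a) with hd_def
    have hd : 0 ≤ d := div_nonneg (by linarith) (by linarith)
    have had : a * d = vl - vf := by
      rw [hd_def]
      have := ha.ne
      field_simp
      ring
    -- The leader's profile is the follower's, advanced by `d`.
    have hshift : ∫ t in (0 : ℝ)..S, max 0 (vl + a * t)
        = ∫ t in d..(S + d), max 0 (vf + a * t) := by
      have := intervalIntegral.integral_comp_add_right (a := 0) (b := S)
        (fun t : ℝ => max 0 (vf + a * t)) d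
      rw [zero_add] at this
      rw [← this]
      refine intervalIntegral.integral_congr fun t _ => ?_
      have : vl + a * t = vf + a * (t + d) := by linarith
      simp only [this]
    have h1 := intervalIntegral.integral_add_adjacent_intervals (hint vf 0 S) (hint vf S (S + d))
    have h2 := intervalIntegral.integral_add_adjacent_intervals (hint vf 0 d) (hint vf d (S + d))
    have h3 : 0 ≤ ∫ t in S..(S + d), max 0 (vf + a * t) :=
      intervalIntegral.integral_nonneg (by linarith) fun t _ => le_max_left _ _
    linarith
  · have := intervalIntegral.integral_mono_on hS (hint vf 0 S) (hint vl 0 S)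
      fun t _ => max_le_max le_rfl (by linarith)
    linarith

/-- A chain of `n ≥ 2` HVs (vehicle `1` in front, vehicle `i+1`
following vehicle `i` at initial gap `g i`), each with speed `u i` satisfying
`max 0 (v i + a·t) ≤ u i t`, `u i t ≤ v_max` on `[0, T_r]`, and
`u i t ≤ max 0 (v i + a·(t - T_r))` for `t ≥ T_r`, stays safe: if
`g i ≥ s_hv(v (i+1), v i)` for all `1 ≤ i ≤ n-1`, then for every `T ≥ 0` and
every `1 ≤ i ≤ n-1`, the gap `g i + ∫₀ᵀ u i - ∫₀ᵀ u (i+1)` is at least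
`s_min`. -/
theorem hv_chain_safety (a T_r s_min v_max : ℝ) (n : ℕ)
    (ha : a < 0) (hTr : 0 ≤ T_r) (hsmin : 0 ≤ s_min) (hvmax : 0 ≤ v_max)
    (hn : 2 ≤ n)
    (v : ℕ → ℝ) (u : ℕ → ℝ → ℝ) (g : ℕ → ℝ)
    (hv : ∀ i : ℕ, 1 ≤ i → i ≤ n → 0 ≤ v i ∧ v i ≤ v_max)
    (hmeas : ∀ i : ℕ, 1 ≤ i → i ≤ n → Measurable (u i))
    (hlow : ∀ i : ℕ, 1 ≤ i → i ≤ n → ∀ t : ℝ, 0 ≤ t →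
      max 0 (v i + a * t) ≤ u i t)
    (hupTr : ∀ i : ℕ, 1 ≤ i → i ≤ n → ∀ t : ℝ, 0 ≤ t → t ≤ T_r →
      u i t ≤ v_max)
    (hup : ∀ i : ℕ, 1 ≤ i → i ≤ n → ∀ t : ℝ, T_r ≤ t →
      u i t ≤ max 0 (v i + a * (t - T_r)))
    (hg : ∀ i : ℕ, 1 ≤ i → i ≤ n - 1 →
      sHV a T_r s_min v_max (v (i + 1)) (v i) ≤ g i) :
    ∀ T : ℝ, 0 ≤ T → ∀ i : ℕ, 1 ≤ i → i ≤ n - 1 →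
      s_min ≤ g i + (∫ t in (0 : ℝ)..T, u i t) - ∫ t in (0 : ℝ)..T, u (i + 1) t := by
  intro T hT i hi hin
  have hin' : i ≤ n := by omega
  have hi1 : 1 ≤ i + 1 := by omega
  have hi1n : i + 1 ≤ n := by omega
  have hnonneg : ∀ j, 1 ≤ j → j ≤ n → ∀ t, 0 ≤ t → 0 ≤ u j t := fun j h1 h2 t ht =>
    (le_max_left _ _).trans (hlow j h1 h2 t ht)
  have hle : ∀ j, 1 ≤ j → j ≤ n → ∀ t, 0 ≤ t → u j t ≤ v_max := by
    intro j h1 h2 t ht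
    rcases le_total t T_r with h | h
    · exact hupTr j h1 h2 t ht h
    · refine (hup j h1 h2 t h).trans (max_le hvmax ?_)
      have := mul_nonpos_of_nonpos_of_nonneg ha.le (sub_nonneg.2 h)
      linarith [(hv j h1 h2).2]
  have hint : ∀ j, 1 ≤ j → j ≤ n → ∀ x y : ℝ, 0 ≤ x → 0 ≤ y →
      IntervalIntegrable (u j) volume x y := fun j h1 h2 x y hx hy =>
    intervalIntegrable_of_bdd (hmeas j h1 h2) (hnonneg j h1 h2) (hle j h1 h2) hx hy
  -- During the reaction time the follower is only known to respect the speed limit.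
  have hreact : ∀ S, 0 ≤ S → ∫ t in (0 : ℝ)..S, u (i + 1) t ≤ v_max * S := by
    intro S hS
    have := intervalIntegral.integral_mono_on hS (hint (i + 1) hi1 hi1n 0 S le_rfl hS)
      (intervalIntegrable_const (c := v_max)) fun t ht => hle (i + 1) hi1 hi1n t ht.1
    simpa [mul_comm] using this
  have hgi := hg i hi hin
  unfold sHV at hgi
  have hvl := (hv i hi hin').1
  rcases le_total T T_r with h | h
  · have h1 := hreact T hT
    have h2 : v_max * T ≤ v_max * T_r := mul_le_mul_of_nonneg_left h hvmax
    have h3 : 0 ≤ ∫ t in (0 : ℝ)..T, u i t :=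
      intervalIntegral.integral_nonneg hT fun t ht => hnonneg i hi hin' t ht.1
    -- At `S = 0` the braking bound says that the braking term of `sHV` is nonnegative.
    have h4 := integral_brake_sub_le (vf := v (i + 1)) ha hvl le_rfl
    simp only [intervalIntegral.integral_same, sub_zero] at h4
    linarith
  · have hS : 0 ≤ T - T_r := sub_nonneg.2 h
    have hcont := continuous_brake a
    have h1 := hreact T_r hTr
    have h2 := intervalIntegral.integral_add_adjacent_intervals
      (hint (i + 1) hi1 hi1n 0 T_r le_rfl hTr) (hint (i + 1) hi1 hi1n T_r T hTr hT)
    have h3 : ∫ t in T_r..T, u (i + 1) t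
        ≤ ∫ t in (0 : ℝ)..(T - T_r), max 0 (v (i + 1) + a * t) := by
      have hsub := intervalIntegral.integral_comp_sub_right (a := T_r) (b := T)
        (fun t : ℝ => max 0 (v (i + 1) + a * t)) T_r
      rw [sub_self] at hsub
      rw [← hsub]
      exact intervalIntegral.integral_mono_on h (hint (i + 1) hi1 hi1n T_r T hTr hT)
        (Continuous.intervalIntegrable (by fun_prop) _ _)
        fun t ht => hup (i + 1) hi1 hi1n t ht.1
    have h4 := intervalIntegral.integral_add_adjacent_intervals
      (hint i hi hin' 0 (T - T_r) le_rfl hS) (hint i hi hin' (T - T_r) T hS hT)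
    have h5 : 0 ≤ ∫ t in (T - T_r)..T, u i t :=
      intervalIntegral.integral_nonneg (by linarith) fun t ht =>
        hnonneg i hi hin' t (hS.trans ht.1)
    have h6 : ∫ t in (0 : ℝ)..(T - T_r), max 0 (v i + a * t)
        ≤ ∫ t in (0 : ℝ)..(T - T_r), u i t :=
      intervalIntegral.integral_mono_on hS ((hcont _).intervalIntegrable _ _)
        (hint i hi hin' 0 (T - T_r) le_rfl hS) fun t ht => hlow i hi hin' t ht.1
    have h7 := integral_brake_sub_le (vf := v (i + 1)) ha hvl hS
    linarith
end
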